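/- Let J be a Borel-fixed monomial ideal of k[x_0,…,x_n] which is x_n-saturated and all of whose minimal generators have degree at most 3, and let e be an integer with 1 ≤ e ≤ n. Assume that for every m with 0 ≤ m ≤ n−e the iterated section ideal J^(m) contains no monomial of degree ≤ 1. Then for every integer i with e ≤ i ≤ n: ∑_{T ∈ 𝒢(J)_3} C(max(T), i−1) = ∑_{α=i}^{n} C(α, i) · |ℳ_{α−1}(3, J^(n−α))|. (By the Eliahou–Kervaire formula the left side equals the graded Betti number β_{i,2}(R/J); when J = Gin(I_X) for a 3-regular closed subscheme X ⊆ P^n of codimension e with property ND(1), the quantity |ℳ_{α−1}(3, J^(n−α))| equals h^1(I_{X∩Λ^α/Λ^α}(1)) for a general linear subspace Λ^α of dimension α, so this is the generic-initial-ideal form of the main Theorem 4.1.) -/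

import Mathlib

/-!
Borel-fixedness collapses the iterated sections: a monomial `T` in `x_0, …, x_α` lies in
`J^(n-α)` iff `T * x_α ^ c ∈ J` for some `c` (`mem_iterSect`). The hypothesis on the
sections therefore says that `J` contains no `U * x_α ^ c` with `deg U ≤ 1` and `α ≥ e`
(`low_degree_not_mem`).

Let `Q` be the set of quadratic monomials `T ∉ J` in `x_0, …, x_{e-1}`. For `j ≥ e - 1`,
the cubic minimal generators `S` of `J` with `max S = j` are the products `T * x_j ∈ J`
with `T ∈ Q` (`Admissible.mem_minGens_iff`): if `S = T * x_j` and `k = max T ≥ e`, write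
`T = U * x_k`; a Borel move gives `U * x_k ^ 2 ∈ J`, which is excluded. Since generators
have degree at most `3`, a product `T * x_α ^ c` with `T` quadratic lies in `J` for some `c`
only if `T * x_α` does, and cubics of `J^(n-α)` already lie in `J`. Hence the cubic minimal
generators of `J^(n-α)` with `max = α - 1` are the `T * x_{α-1} ∈ J` with `T ∈ Q` and
`T * x_α ∉ J` (`Admissible.pad_image_Mset`).

For `T ∈ Q` the indices `j` with `T * x_j ∈ J` form an initial segment `[0, h(T))` by the
Borel property, and `h(T) ≤ n` by saturation. So the right side of the identity is
`∑_{T ∈ Q} C(h(T), i)`, while the left side is `∑_{T ∈ Q} ∑_{i-1 ≤ j < h(T)} C(j, i-1)`;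
these agree by the hockey-stick identity (`sum_choose_initial_segment`).
-/

/-- The exponent vector of a monomial in the `N` variables `x_0, …, x_{N-1}`. -/
abbrev Mon (N : ℕ) : Type := Fin N → ℕ

/-- The total degree of a monomial. -/
def mdeg {N : ℕ} (m : Mon N) : ℕ := ∑ i, m i

/-- `mmax m` is the largest index `i` such that `x_i` divides `m` (`0` if `m = 1`). -/
def mmax {N : ℕ} (m : Mon N) : ℕ :=
  (Finset.univ.filter fun i : Fin N => 0 < m i).sup fun i => (i : ℕ)

/-- `J` is the set of monomials of a monomial ideal: membership is stable under
multiplication by arbitrary monomials. -/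
def IsMonomialIdeal {N : ℕ} (J : Set (Mon N)) : Prop :=
  ∀ m ∈ J, ∀ t : Mon N, m + t ∈ J

/-- Borel-fixed property (characteristic-zero combinatorial definition): if `m ∈ J`,
`x_i ∣ m` and `j ≤ i` then `(m / x_i) * x_j ∈ J`. -/
def IsBorelFixed {N : ℕ} (J : Set (Mon N)) : Prop :=
  ∀ (m : Mon N) (i j : Fin N), j ≤ i → m + Pi.single i 1 ∈ J → m + Pi.single j 1 ∈ J

/-- `m` is a minimal generator of the monomial ideal `J`. -/
def IsMinGen {N : ℕ} (J : Set (Mon N)) (m : Mon N) : Prop :=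
  m ∈ J ∧ ∀ ℓ : Fin N, 0 < m ℓ → m - Pi.single ℓ 1 ∉ J

/-- `𝒢(J)_d`: the set of minimal generators of `J` of degree `d`. -/
def minGens {N : ℕ} (J : Set (Mon N)) (d : ℕ) : Set (Mon N) :=
  {m | IsMinGen J m ∧ mdeg m = d}

/-- `ℳ_i(d, J)`: the set of minimal generators of `J` of degree `d` with `max = i`. -/
def Mset {N : ℕ} (J : Set (Mon N)) (d i : ℕ) : Set (Mon N) :=
  {m | IsMinGen J m ∧ mdeg m = d ∧ mmax m = i}

/-- `J ⊆ k[x_0, …, x_K]` is saturated with respect to the last variable `x_K`. -/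
def IsSatLast {K : ℕ} (J : Set (Mon (K + 1))) : Prop :=
  ∀ m : Mon (K + 1), m + Pi.single (Fin.last K) 1 ∈ J → m ∈ J

/-- The section ideal `J′ ⊆ k[x_0, …, x_{K-1}]` of `J ⊆ k[x_0, …, x_K]`, whose
monomials are the monomials `m` in `x_0, …, x_{K-1}` with `m * x_{K-1} ^ c ∈ J`
for some `c ≥ 0`. -/
def sectIdeal {K : ℕ} (J : Set (Mon (K + 1))) : Set (Mon K) :=
  {m | ∃ c : ℕ,
    (Fin.snoc m 0 : Mon (K + 1)) + Pi.single (⟨K - 1, by omega⟩ : Fin (K + 1)) c ∈ J}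

/-- Auxiliary form of the section ideal, allowing a degenerate number of variables. -/
def sectPred : {K : ℕ} → Set (Mon K) → Set (Mon (K - 1))
  | 0, J => J
  | _ + 1, J => sectIdeal J

/-- The iterated section ideal `J^(m) ⊆ k[x_0, …, x_{N-1-m}]`. -/
def iterSect {N : ℕ} (J : Set (Mon N)) : (m : ℕ) → Set (Mon (N - m))
  | 0 => J
  | m + 1 => sectPred (iterSect J m)

/-! ### Monomials: degree, largest variable, change of the number of variables -/

/-- The monomial `x_j ^ c` in `N` variables, indexed by a natural number `j`; it is `1`
(the zero exponent vector) when `j` is out of range. -/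
def xpow (N j c : ℕ) : Mon N := fun k => if (k : ℕ) = j then c else 0

/-- A monomial in `a` variables read as a monomial in `b` variables: missing exponents are
`0`, exponents of nonexistent variables are dropped. -/
def pad (a b : ℕ) (T : Mon a) : Mon b := fun k => if h : (k : ℕ) < a then T ⟨k, h⟩ else 0

lemma single_eq_xpow {N : ℕ} (j : Fin N) (c : ℕ) : (Pi.single j c : Mon N) = xpow N j c := by
  funext k
  simp only [xpow, Pi.single_apply, Fin.ext_iff]

lemma xpow_add (N j c d : ℕ) : xpow N j (c + d) = xpow N j c + xpow N j d := by
  funext k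
  simp only [xpow, Pi.add_apply]
  split_ifs <;> rfl

lemma xpow_zero (N j : ℕ) : xpow N j 0 = 0 := by
  funext k
  simp [xpow]

lemma mdeg_add {N : ℕ} (S T : Mon N) : mdeg (S + T) = mdeg S + mdeg T := by
  simp [mdeg, Finset.sum_add_distrib]

lemma mdeg_xpow {N j : ℕ} (hj : j < N) (c : ℕ) : mdeg (xpow N j c) = c := by
  have := single_eq_xpow (⟨j, hj⟩ : Fin N) c
  simp only at this
  rw [← this, mdeg, Finset.sum_pi_single']
  simp

lemma mdeg_pad {a b : ℕ} (hab : a ≤ b) (T : Mon a) : mdeg (pad a b T) = mdeg T := by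
  obtain ⟨d, rfl⟩ := Nat.exists_eq_add_of_le hab
  simp [mdeg, pad, Fin.sum_univ_add]

lemma mmax_le_iff {N : ℕ} (S : Mon N) (b : ℕ) :
    mmax S ≤ b ↔ ∀ k : Fin N, 0 < S k → (k : ℕ) ≤ b := by
  simp [mmax, Finset.sup_le_iff]

lemma le_mmax {N : ℕ} {S : Mon N} {k : Fin N} (h : 0 < S k) : (k : ℕ) ≤ mmax S :=
  (mmax_le_iff S _).1 le_rfl k h

lemma mmax_pad {a b : ℕ} (hab : a ≤ b) (T : Mon a) : mmax (pad a b T) = mmax T := by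
  apply le_antisymm
  · rw [mmax_le_iff]
    intro k hk
    unfold pad at hk
    split_ifs at hk with h
    · exact le_mmax hk
    · omega
  · rw [mmax_le_iff]
    intro k hk
    have : 0 < pad a b T ⟨k, by omega⟩ := by simpa [pad] using hk
    simpa using le_mmax this

/-- A monomial of positive degree is divisible by its variable of largest index. -/
lemma exists_eq_mmax {N : ℕ} {S : Mon N} (h : 0 < mdeg S) :
    ∃ k : Fin N, (k : ℕ) = mmax S ∧ 0 < S k := by
  have hne : (Finset.univ.filter fun i : Fin N => 0 < S i).Nonempty := by
    obtain ⟨k, -, hk⟩ := Finset.exists_ne_zero_of_sum_ne_zero (show mdeg S ≠ 0 by omega)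
    exact ⟨k, by simp; omega⟩
  obtain ⟨k, hk, hs⟩ := Finset.exists_mem_eq_sup _ hne (fun i : Fin N => (i : ℕ))
  exact ⟨k, hs.symm, by simpa using hk⟩

lemma sub_xpow_add {N : ℕ} {S : Mon N} {k : Fin N} (h : 0 < S k) :
    S - xpow N k 1 + xpow N k 1 = S := by
  funext l
  by_cases hl : l = k
  · subst hl; simp [xpow]; omega
  · simp [xpow, Fin.ext_iff.not.1 hl]

lemma exists_eq_add_xpow_mmax {N : ℕ} {S : Mon N} (h : 0 < mdeg S) :
    ∃ T : Mon N, S = T + xpow N (mmax S) 1 ∧ mdeg T + 1 = mdeg S ∧ mmax T ≤ mmax S := by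
  obtain ⟨k, hk, hp⟩ := exists_eq_mmax h
  have h1 := sub_xpow_add hp
  refine ⟨S - xpow N k 1, by rw [← hk, h1], ?_, ?_⟩
  · conv_rhs => rw [← h1, mdeg_add, mdeg_xpow k.2]
  · rw [mmax_le_iff]
    intro l hl
    refine le_mmax (k := l) ?_
    simp only [Pi.sub_apply] at hl
    omega

lemma mmax_add_xpow {N j : ℕ} (hj : j < N) {T : Mon N} (h : mmax T ≤ j) :
    mmax (T + xpow N j 1) = j := by
  apply le_antisymm
  · rw [mmax_le_iff] at h ⊢
    intro k hk
    simp only [Pi.add_apply, xpow] at hk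
    by_cases hkj : (k : ℕ) = j
    · omega
    · exact h k (by simpa [hkj] using hk)
  · exact le_mmax (k := ⟨j, hj⟩) (by simp [xpow])

lemma mdeg_le_of_le {N : ℕ} {S T : Mon N} (h : S ≤ T) : mdeg S ≤ mdeg T :=
  Finset.sum_le_sum fun k _ => h k

lemma eq_of_le_of_mdeg {N : ℕ} {S T : Mon N} (h : S ≤ T) (hd : mdeg T ≤ mdeg S) : S = T := by
  have := (Finset.sum_eq_sum_iff_of_le (fun k (_ : k ∈ Finset.univ) => h k)).1
    (le_antisymm (mdeg_le_of_le h) hd)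
  funext k
  exact this k (Finset.mem_univ k)

lemma finite_mdeg (N d : ℕ) : {S : Mon N | mdeg S = d}.Finite := by
  refine (Set.finite_Iic (fun _ => d : Mon N)).subset ?_
  intro S hS k
  have h : S k ≤ mdeg S := Finset.single_le_sum (f := S) (fun _ _ => Nat.zero_le _) (Finset.mem_univ k)
  exact h.trans (le_of_eq hS)

/-! ### Monomial and Borel-fixed ideals -/

lemma IsMonomialIdeal.mono {N : ℕ} {J : Set (Mon N)} (hJ : IsMonomialIdeal J) {S T : Mon N}
    (hS : S ∈ J) (h : S ≤ T) : T ∈ J := by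
  have := hJ S hS (T - S)
  rwa [add_tsub_cancel_of_le h] at this

/-- Every monomial of `J` is divisible by a minimal generator. -/
lemma exists_minGen_le {N : ℕ} {J : Set (Mon N)} {S : Mon N} (hS : S ∈ J) :
    ∃ g, IsMinGen J g ∧ g ≤ S := by
  induction hd : mdeg S using Nat.strong_induction_on generalizing S with
  | _ d ih =>
    by_cases hm : IsMinGen J S
    · exact ⟨S, hm, le_rfl⟩
    · simp only [IsMinGen, hS, true_and, not_forall, not_not] at hm
      obtain ⟨l, hl, hmem⟩ := hm
      have h1 := sub_xpow_add hl
      rw [single_eq_xpow] at hmem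
      have h2 : mdeg (S - xpow N l 1) + 1 = d := by
        rw [← hd]; conv_rhs => rw [← h1, mdeg_add, mdeg_xpow l.2]
      obtain ⟨g, hg, hle⟩ := ih _ (by omega) hmem rfl
      exact ⟨g, hg, hle.trans (fun k => Nat.sub_le _ _)⟩

/-- Borel moves of `c` factors at once. -/
lemma IsBorelFixed.move {N : ℕ} {J : Set (Mon N)} (hB : IsBorelFixed J) {i j : ℕ}
    (hi : i < N) (hji : j ≤ i) (c : ℕ) (S : Mon N) (h : S + xpow N i c ∈ J) :
    S + xpow N j c ∈ J := by
  induction c generalizing S with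
  | zero => simpa [xpow_zero] using h
  | succ c ih =>
    have key := hB (S + xpow N i c) ⟨i, hi⟩ ⟨j, by omega⟩ hji
    simp only [single_eq_xpow] at key
    rw [xpow_add, ← add_assoc] at h ⊢
    have h2 := key h
    rw [add_right_comm] at h2 ⊢
    exact ih _ h2

/-! ### Iterated sections as a single saturation -/

lemma pad_sub_xpow {a b : ℕ} (T : Mon a) (l : ℕ) :
    pad a b (T - xpow a l 1) = pad a b T - xpow b l 1 := by
  funext k
  simp only [pad, xpow, Pi.sub_apply]
  split_ifs <;> simp_all

lemma pad_injective {a b : ℕ} (hab : a ≤ b) : Function.Injective (pad a b) := by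
  intro S T h
  funext k
  have := congrFun h ⟨k, by omega⟩
  simpa [pad] using this

lemma pad_restrict {a b : ℕ} {S : Mon b} (h : ∀ k : Fin b, 0 < S k → (k : ℕ) < a) :
    pad a b (pad b a S) = S := by
  funext k
  by_cases h1 : (k : ℕ) < a
  · simp [pad, h1]
  · have h2 : S k = 0 := by
      by_contra hc
      exact h1 (h k (by omega))
    simp [pad, h1, h2]

lemma mem_sectPred {K : ℕ} (hK : 2 ≤ K) (I : Set (Mon K)) (T : Mon (K - 1)) :
    T ∈ sectPred I ↔ ∃ c, pad (K - 1) K T + xpow K (K - 2) c ∈ I := by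
  obtain ⟨K, rfl⟩ : ∃ L, K = L + 1 := ⟨K - 1, by omega⟩
  have h : (Fin.snoc (α := fun _ => ℕ) T 0 : Mon (K + 1)) = pad K (K + 1) T := by
    funext k
    simp only [Fin.snoc, pad]
    rfl
  change (∃ c, (Fin.snoc (α := fun _ => ℕ) T 0 : Mon (K + 1)) + Pi.single _ c ∈ I) ↔ _
  simp only [h, single_eq_xpow]
  rfl

/-- For a Borel-fixed ideal the iterated section is a single saturation: a monomial in the
first `n + 1 - m` variables lies in `J^(m)` iff its product with a power of `x_{n-m}`
lies in `J`. -/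
lemma mem_iterSect {n : ℕ} {J : Set (Mon (n + 1))} (hB : IsBorelFixed J) (hsat : IsSatLast J)
    (m : ℕ) (hm : m ≤ n) (T : Mon (n + 1 - m)) :
    T ∈ iterSect J m ↔ ∃ c, pad (n + 1 - m) (n + 1) T + xpow (n + 1) (n - m) c ∈ J := by
  induction m with
  | zero =>
    have hT : pad (n + 1 - 0) (n + 1) T = T := by
      funext k
      exact dif_pos k.2
    rw [hT]
    refine ⟨fun h => ⟨0, by rw [xpow_zero, add_zero]; exact h⟩, ?_⟩
    rintro ⟨c, hc⟩
    induction c with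
    | zero => rw [xpow_zero, add_zero] at hc; exact hc
    | succ c ih =>
      apply ih
      apply hsat
      rw [single_eq_xpow, add_assoc, Fin.val_last]
      rw [xpow_add] at hc
      exact hc
  | succ m ih =>
    have h1 : T ∈ iterSect J (m + 1) ↔
        ∃ c, pad (n + 1 - m - 1) (n + 1 - m) T + xpow (n + 1 - m) (n + 1 - m - 2) c
          ∈ iterSect J m := mem_sectPred (K := n + 1 - m) (by omega) (iterSect J m) T
    have h2 : ∀ c, pad (n + 1 - m) (n + 1) (pad (n + 1 - m - 1) (n + 1 - m) T +
        xpow (n + 1 - m) (n + 1 - m - 2) c) =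
        pad (n + 1 - (m + 1)) (n + 1) T + xpow (n + 1) (n - (m + 1)) c := by
      intro c
      have e1 : n + 1 - m - 2 = n - (m + 1) := by omega
      funext k
      simp only [pad, xpow, Pi.add_apply, e1]
      by_cases ha : (k : ℕ) < n + 1 - m
      · rw [dif_pos ha]
        rfl
      · rw [dif_neg ha, dif_neg (by omega), if_neg (by omega)]
    rw [h1]
    simp only [ih (by omega), h2]
    constructor
    · rintro ⟨c, d, h⟩
      refine ⟨c + d, ?_⟩
      rw [xpow_add, ← add_assoc]
      exact hB.move (by omega) (by omega) d _ h
    · rintro ⟨c, h⟩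
      exact ⟨c, 0, by rwa [xpow_zero, add_zero]⟩

/-- Under the section hypothesis on `J^(0), …, J^(n-e)`, no product of a monomial of degree
at most `1` with a power of `x_α`, `α ≥ e`, lies in `J`. A linear form `x_l` with `l > α`
reduces to the monomial `1` by a Borel move. -/
lemma low_degree_not_mem {n : ℕ} {J : Set (Mon (n + 1))} (hB : IsBorelFixed J)
    (hsat : IsSatLast J) {e : ℕ}
    (hND : ∀ m : ℕ, m ≤ n - e → ∀ T ∈ iterSect J m, ¬ mdeg T ≤ 1)
    {α : ℕ} (hα : e ≤ α) (hαn : α ≤ n) (S : Mon (n + 1)) (hS : mdeg S ≤ 1) (c : ℕ) :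
    S + xpow (n + 1) α c ∉ J := by
  have main : ∀ S : Mon (n + 1), mdeg S ≤ 1 → mmax S ≤ α → ∀ c, S + xpow (n + 1) α c ∉ J := by
    intro S hS hm c hmem
    have hr : pad (n + 1 - (n - α)) (n + 1) (pad (n + 1) (n + 1 - (n - α)) S) = S :=
      pad_restrict fun k hk => by have := le_mmax hk; omega
    refine hND (n - α) (by omega) (pad (n + 1) (n + 1 - (n - α)) S) ?_ ?_
    · rw [mem_iterSect hB hsat _ (by omega), hr]
      refine ⟨c, ?_⟩
      rwa [show n - (n - α) = α by omega]
    · rwa [← mdeg_pad (b := n + 1) (by omega), hr]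
  by_cases hm : mmax S ≤ α
  · exact main S hS hm c
  · intro hmem
    have hpos : 0 < mdeg S := by
      by_contra h0
      have h1 : mdeg S = 0 := by omega
      apply hm
      rw [mmax_le_iff]
      intro k hk
      have h2 := Finset.single_le_sum (f := S) (fun _ _ => Nat.zero_le _) (Finset.mem_univ k)
      unfold mdeg at h1
      omega
    obtain ⟨k, hk, -⟩ := exists_eq_mmax hpos
    obtain ⟨T, hT, hd, -⟩ := exists_eq_add_xpow_mmax hpos
    have hT0 : T = 0 := (eq_of_le_of_mdeg (S := 0) (T := T) (fun _ => Nat.zero_le _)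
      ((by omega : mdeg T ≤ 0).trans (Nat.zero_le _))).symm
    rw [hT0, zero_add] at hT
    have hml : mmax S ≤ n := by omega
    generalize mmax S = l at hm hT hml
    rw [hT, add_comm (xpow _ _ _)] at hmem
    have h3 := hB.move (by omega) (by omega : α ≤ l) 1 _ hmem
    rw [← xpow_add] at h3
    refine main 0 (by simp [mdeg]) ?_ (c + 1) (by rwa [zero_add])
    rw [mmax_le_iff]
    simp

/-! ### Cubic generators of `J` and of its sections -/

/-- The conclusions about `J` extracted from its iterated sections: `J` is a Borel-fixed monomial
ideal with generators of degree at most `3`, and it contains no product of a monomial of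
degree at most `1` with a power of a variable of index at least `e`. -/
structure Admissible {n : ℕ} (J : Set (Mon (n + 1))) (e : ℕ) : Prop where
  ideal : IsMonomialIdeal J
  borel : IsBorelFixed J
  gen : ∀ m : Mon (n + 1), IsMinGen J m → mdeg m ≤ 3
  low : ∀ α, e ≤ α → α ≤ n → ∀ S : Mon (n + 1), mdeg S ≤ 1 → ∀ c, S + xpow (n + 1) α c ∉ J

namespace Admissible

variable {n : ℕ} {J : Set (Mon (n + 1))} {e : ℕ}

/-- If `S * x_α ^ c ∈ J`, then some `U * x_α ^ a ∈ J` with `U ∣ S`, `deg U ≥ 2` and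
`deg U + a ≤ 3`. -/
lemma exists_dvd (h : Admissible J e) {α : ℕ} (hα : e ≤ α) (hαn : α ≤ n) {S : Mon (n + 1)} {c : ℕ}
    (hS : S + xpow (n + 1) α c ∈ J) :
    ∃ U a, U ≤ S ∧ 2 ≤ mdeg U ∧ mdeg U + a ≤ 3 ∧ U + xpow (n + 1) α a ∈ J := by
  obtain ⟨g, hg, hle⟩ := exists_minGen_le hS
  have hU : g ⊓ S + xpow (n + 1) α (g ⟨α, by omega⟩ - S ⟨α, by omega⟩) = g := by
    funext k
    have hk := hle k
    simp only [xpow, Pi.add_apply, Pi.inf_apply] at hk ⊢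
    by_cases hkα : (k : ℕ) = α
    · have : (⟨α, by omega⟩ : Fin (n + 1)) = k := Fin.ext hkα.symm
      rw [this]
      simp only [if_pos hkα] at hk ⊢
      omega
    · simp only [if_neg hkα] at hk ⊢
      omega
  have hmem := hg.1
  rw [← hU] at hmem
  have hd := h.gen g hg
  rw [← hU, mdeg_add, mdeg_xpow (by omega)] at hd
  refine ⟨_, _, inf_le_right, ?_, hd, hmem⟩
  by_contra hlt
  exact h.low α hα hαn _ (by omega) _ hmem

/-- A quadratic monomial of the saturation of `J` with respect to `x_α` is already in `J`
after one multiplication by `x_α`. -/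
lemma quadric_mem (h : Admissible J e) {α : ℕ} (hα : e ≤ α) (hαn : α ≤ n) {T : Mon (n + 1)} {c : ℕ}
    (hT : mdeg T = 2) (hmem : T + xpow (n + 1) α c ∈ J) : T + xpow (n + 1) α 1 ∈ J := by
  obtain ⟨U, a, hle, h2, h3, hJ⟩ := h.exists_dvd hα hαn hmem
  have hU : U = T := eq_of_le_of_mdeg hle (by omega)
  subst hU
  refine h.ideal.mono hJ fun k => ?_
  simp only [Pi.add_apply, xpow]
  split_ifs <;> omega

/-- The cubic monomials of the section ideal in `k[x_0, …, x_α]` already lie in `J`. -/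
lemma cubic_mem (h : Admissible J e) {α : ℕ} (hα : e ≤ α) (hαn : α ≤ n) {S : Mon (n + 1)} {c : ℕ}
    (hS : mdeg S = 3) (hm : mmax S ≤ α) (hmem : S + xpow (n + 1) α c ∈ J) : S ∈ J := by
  obtain ⟨U, a, hle, h2, h3, hJ⟩ := h.exists_dvd hα hαn hmem
  by_cases hU3 : mdeg U = 3
  · rw [show a = 0 by omega, xpow_zero, add_zero] at hJ
    exact h.ideal.mono hJ hle
  · -- `S = U * x_l` with `l ≤ α`, and `x_α` may be moved down to `x_l`.
    have h1 : U + xpow (n + 1) α 1 ∈ J := by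
      refine h.ideal.mono hJ fun k => ?_
      simp only [Pi.add_apply, xpow]
      split_ifs <;> omega
    have hsum : U + (S - U) = S := add_tsub_cancel_of_le hle
    have hd : 0 < mdeg (S - U) := by
      rw [← hsum, mdeg_add] at hS
      omega
    obtain ⟨k, -, hk⟩ := exists_eq_mmax hd
    simp only [Pi.sub_apply] at hk
    have hkα : (k : ℕ) ≤ α := (le_mmax (S := S) (by omega)).trans hm
    refine h.ideal.mono (h.borel.move (by omega) hkα 1 _ h1) fun l => ?_
    have := hle l
    simp only [Pi.add_apply, xpow]
    split_ifs with hl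
    · have : l = k := Fin.ext hl
      subst this
      omega
    · omega

/-- If `T * x_j ∈ J` with `T` quadratic and `max T ≤ j`, then `T` only involves
`x_0, …, x_{e-1}`. -/
lemma mmax_lt (h : Admissible J e) {T : Mon (n + 1)} {j : ℕ} (hj : j ≤ n) (hT : mdeg T = 2)
    (hm : mmax T ≤ j) (hmem : T + xpow (n + 1) j 1 ∈ J) : mmax T < e := by
  by_contra hlt
  obtain ⟨U, hU, hd, -⟩ := exists_eq_add_xpow_mmax (S := T) (by omega)
  have h1 := h.borel.move (by omega) hm 1 _ hmem
  generalize mmax T = l at *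
  rw [hU, add_assoc, ← xpow_add] at h1
  exact h.low _ (by omega) (by omega) U (by omega) _ h1

/-- If `max T ≤ j`, `x_l` divides `T * x_j` and `(T * x_j / x_l) * Y ∈ J`, then `T * Y ∈ J`:
for `l ≠ j` one moves `x_j` down to `x_l`. With `Y` a power of a variable this gives the
minimality of generators of the form `T * x_j`, in `J` and in its sections. -/
lemma swap_mem (hB : IsBorelFixed J) {T Y : Mon (n + 1)} {j : ℕ} {l : Fin (n + 1)} (hj : j ≤ n)
    (hm : mmax T ≤ j) (hl : 0 < (T + xpow (n + 1) j 1) l)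
    (hmem : T + xpow (n + 1) j 1 - xpow (n + 1) l 1 + Y ∈ J) : T + Y ∈ J := by
  by_cases hlj : (l : ℕ) = j
  · rwa [hlj, add_tsub_cancel_right] at hmem
  · have hTl : 0 < T l := by simpa [xpow, hlj] using hl
    have e1 : T + xpow (n + 1) j 1 - xpow (n + 1) l 1 + Y
        = (T - xpow (n + 1) l 1 + Y) + xpow (n + 1) j 1 := by
      conv_lhs => rw [← sub_xpow_add hTl, add_right_comm, add_tsub_cancel_right]
      rw [add_right_comm]
    rw [e1] at hmem
    have h1 := hB.move (by omega) ((le_mmax hTl).trans hm) 1 _ hmem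
    rwa [add_right_comm, sub_xpow_add hTl] at h1

/-- The quadratic monomials in `x_0, …, x_{e-1}` not lying in `J`. Both sides of the
identity are sums over this set. -/
def quad (J : Set (Mon (n + 1))) (e : ℕ) : Set (Mon (n + 1)) :=
  {T | mdeg T = 2 ∧ mmax T < e ∧ T ∉ J}

/-- Minimal cubic generators of `J` with `max = j ≥ e - 1` are the products `T * x_j ∈ J` with
`T` in `quad J e`. -/
lemma mem_minGens_iff (h : Admissible J e) {j : ℕ} (hj : j ≤ n) (hej : e ≤ j + 1) (S : Mon (n + 1)) :
    (S ∈ minGens J 3 ∧ mmax S = j) ↔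
      ∃ T ∈ quad J e, T + xpow (n + 1) j 1 ∈ J ∧ T + xpow (n + 1) j 1 = S := by
  constructor
  · rintro ⟨⟨⟨hS, hmin⟩, hd⟩, rfl⟩
    obtain ⟨T, hT, hdT, hm⟩ := exists_eq_add_xpow_mmax (S := S) (by omega)
    obtain ⟨k, hk, hp⟩ := exists_eq_mmax (S := S) (by omega)
    refine ⟨T, ⟨by omega, h.mmax_lt hj (by omega) hm (hT ▸ hS), ?_⟩, hT ▸ hS, hT.symm⟩
    have h1 := hmin k hp
    rw [single_eq_xpow, hk] at h1
    intro hTJ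
    apply h1
    generalize mmax S = j at *
    rwa [hT, add_tsub_cancel_right]
  · rintro ⟨T, ⟨hd, hm, hTJ⟩, hS, rfl⟩
    refine ⟨⟨⟨hS, fun l hl hmem => hTJ ?_⟩, by rw [mdeg_add, mdeg_xpow (by omega), hd]⟩,
      mmax_add_xpow (by omega) (by omega)⟩
    rw [single_eq_xpow] at hmem
    simpa using swap_mem h.borel (Y := 0) hj (by omega) hl (by rwa [add_zero])

/-- Minimal cubic generators of the section `J^(n-α)` with `max = α - 1` are the products
`T * x_{α-1}` with `T` in `quad J e`, `T * x_{α-1} ∈ J` and `T * x_α ∉ J`. -/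
lemma pad_image_Mset (h : Admissible J e) (hsat : IsSatLast J) {α : ℕ} (hα1 : 1 ≤ α) (hα : e ≤ α)
    (hαn : α ≤ n) :
    pad (n + 1 - (n - α)) (n + 1) '' Mset (iterSect J (n - α)) 3 (α - 1) =
      (fun T => T + xpow (n + 1) (α - 1) 1) '' {T | T ∈ quad J e ∧
        T + xpow (n + 1) (α - 1) 1 ∈ J ∧ T + xpow (n + 1) α 1 ∉ J} := by
  have hmem : ∀ R, R ∈ iterSect J (n - α) ↔
      ∃ c, pad (n + 1 - (n - α)) (n + 1) R + xpow (n + 1) α c ∈ J := by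
    intro R
    have := mem_iterSect h.borel hsat (n - α) (by omega) R
    rwa [show n - (n - α) = α by omega] at this
  ext S
  constructor
  · rintro ⟨R, ⟨⟨hR, hmin⟩, hd, hm⟩, rfl⟩
    rw [← mdeg_pad (b := n + 1) (by omega)] at hd
    rw [← mmax_pad (b := n + 1) (by omega)] at hm
    obtain ⟨c, hc⟩ := (hmem R).1 hR
    have hS := h.cubic_mem hα hαn hd (by omega) hc
    obtain ⟨T, hT, hdT, hmT⟩ :=
      exists_eq_add_xpow_mmax (S := pad (n + 1 - (n - α)) (n + 1) R) (by omega)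
    obtain ⟨k, hk, hp⟩ := exists_eq_mmax (S := pad (n + 1 - (n - α)) (n + 1) R) (by omega)
    rw [hm] at hT hk hmT
    have hT2 : ∀ a, T + xpow (n + 1) α a ∉ J := by
      intro a ha
      have hka : (k : ℕ) < n + 1 - (n - α) := by omega
      refine hmin ⟨k, hka⟩ (by simpa [pad, hka] using hp) ?_
      rw [single_eq_xpow, hmem, pad_sub_xpow]
      refine ⟨a, ?_⟩
      rw [hT]
      simp only [hk]
      rwa [add_tsub_cancel_right]
    have hTJ := hT2 0
    rw [xpow_zero, add_zero] at hTJ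
    rw [hT] at hS
    exact ⟨T, ⟨⟨by omega, h.mmax_lt (by omega) (by omega) hmT hS, hTJ⟩, hS, hT2 1⟩, hT.symm⟩
  · rintro ⟨T, ⟨⟨hd, hm, hTJ⟩, hS, hTα⟩, rfl⟩
    have hmS : mmax (T + xpow (n + 1) (α - 1) 1) = α - 1 := mmax_add_xpow (by omega) (by omega)
    have hr : pad (n + 1 - (n - α)) (n + 1)
        (pad (n + 1) (n + 1 - (n - α)) (T + xpow (n + 1) (α - 1) 1))
          = T + xpow (n + 1) (α - 1) 1 :=
      pad_restrict fun k hk => by have := le_mmax hk; omega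
    refine ⟨_, ⟨⟨?_, ?_⟩, ?_, ?_⟩, hr⟩
    · rw [hmem, hr]
      exact ⟨0, by rwa [xpow_zero, add_zero]⟩
    · intro l hl hlm
      rw [single_eq_xpow, hmem, pad_sub_xpow, hr] at hlm
      obtain ⟨c, hc⟩ := hlm
      have hl' : 0 < (T + xpow (n + 1) (α - 1) 1) ⟨l, by omega⟩ := by
        rw [← hr]
        simpa [pad] using hl
      have h1 := swap_mem h.borel (by omega) (by omega) hl' hc
      exact hTα (h.quadric_mem hα hαn hd h1)
    · rw [← mdeg_pad (b := n + 1) (by omega), hr, mdeg_add, mdeg_xpow (by omega), hd]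
    · rw [← mmax_pad (b := n + 1) (by omega), hr, hmS]

end Admissible

/-! ### The binomial identity -/

/-- If `q` holds exactly on an initial segment `[0, h)` of `[0, n]` with `h ≤ n`, both sums are
`C(h, i)`: the first by the hockey-stick identity, the second because only `α = h`
contributes. -/
lemma sum_choose_initial_segment {n i : ℕ} (hi : 1 ≤ i) (q : ℕ → Prop) [DecidablePred q]
    (hq : ∀ a b, a ≤ b → b ≤ n → q b → q a) (hn : ¬ q n) :
    (∑ j ∈ (Finset.Icc (i - 1) n).filter q, j.choose (i - 1)) =
      ∑ α ∈ (Finset.Icc i n).filter (fun α => q (α - 1) ∧ ¬ q α), α.choose i := by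
  obtain ⟨i, rfl⟩ : ∃ i', i = i' + 1 := ⟨i - 1, by omega⟩
  have hex : ∃ a, ¬ q a := ⟨n, hn⟩
  obtain ⟨h, hh⟩ : ∃ h, h = Nat.find hex := ⟨_, rfl⟩
  have hhn : h ≤ n := hh ▸ Nat.find_min' hex hn
  have hspec : ¬ q h := hh ▸ Nat.find_spec hex
  have hlt : ∀ a, a ≤ n → (q a ↔ a < h) := by
    intro a ha
    constructor
    · intro hqa
      by_contra hc
      exact hspec (hq h a (by omega) ha hqa)
    · intro hah
      by_contra hc
      exact Nat.find_min hex (hh ▸ hah) hc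
  have e1 : (Finset.Icc (i + 1 - 1) n).filter q = Finset.Ico i h := by
    ext a
    simp only [Finset.mem_filter, Finset.mem_Icc, Finset.mem_Ico]
    constructor
    · rintro ⟨⟨h1, h2⟩, h3⟩
      have := (hlt a h2).1 h3
      omega
    · rintro ⟨h1, h2⟩
      exact ⟨by omega, (hlt a (by omega)).2 h2⟩
  have e2 : (Finset.Icc (i + 1) n).filter (fun α => q (α - 1) ∧ ¬ q α)
      = if i < h then {h} else ∅ := by
    ext a
    simp only [Finset.mem_filter, Finset.mem_Icc]
    have : a ∈ (if i < h then {h} else ∅ : Finset ℕ) ↔ i < h ∧ a = h := by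
      split_ifs <;> simp_all
    rw [this]
    constructor
    · rintro ⟨⟨h1, h2⟩, h3, h4⟩
      rw [hlt _ (by omega)] at h3 h4
      omega
    · rintro ⟨h1, h2⟩
      rw [hlt _ (by omega), hlt _ (by omega)]
      omega
  rw [e1, e2, Nat.add_sub_cancel]
  split_ifs with hih
  · obtain ⟨h, rfl⟩ : ∃ h', h = h' + 1 := ⟨h - 1, by omega⟩
    rw [Finset.sum_singleton, ← Nat.sum_Icc_choose]
    rfl
  · rw [Finset.Ico_eq_empty hih]
    rfl

/-- Theorem 4.1, generic-initial-ideal form. Let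
`J ⊆ k[x_0, …, x_n]` be a Borel-fixed monomial ideal, `x_n`-saturated, with all
minimal generators of degree `≤ 3`, let `1 ≤ e ≤ n`, and suppose that for every
`0 ≤ m ≤ n - e` the iterated section ideal `J^(m)` contains no monomial of degree
`≤ 1`. Then for every `e ≤ i ≤ n`,
`∑_{T ∈ 𝒢(J)_3} C(max T, i - 1) = ∑_{α = i}^{n} C(α, i) * |ℳ_{α-1}(3, J^(n-α))|`. -/
theorem stmt12 {n : ℕ} (hn : 1 ≤ n) (J : Set (Mon (n + 1)))
    (hJ : IsMonomialIdeal J) (hB : IsBorelFixed J) (hsat : IsSatLast J)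
    (hgen : ∀ m : Mon (n + 1), IsMinGen J m → mdeg m ≤ 3)
    (e : ℕ) (he1 : 1 ≤ e) (hen : e ≤ n)
    (hND : ∀ m : ℕ, m ≤ n - e → ∀ T ∈ iterSect J m, ¬ mdeg T ≤ 1) :
    ∀ i : ℕ, e ≤ i → i ≤ n →
      (∑ᶠ T ∈ minGens J 3, (mmax T).choose (i - 1))
        = ∑ α ∈ Finset.Icc i n,
            α.choose i * (Mset (iterSect J (n - α)) 3 (α - 1)).ncard := by
  classical
  intro i hei hin
  have h : Admissible J e :=
    ⟨hJ, hB, hgen, fun α hα hαn S hS c => low_degree_not_mem hB hsat hND hα hαn S hS c⟩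
  have hQfin : (Admissible.quad J e).Finite :=
    (finite_mdeg (n + 1) 2).subset fun T hT => hT.1
  have hinj : ∀ j, Function.Injective fun T : Mon (n + 1) => T + xpow (n + 1) j 1 :=
    fun j S T hST => add_right_cancel hST
  have hfin : (minGens J 3).Finite := (finite_mdeg (n + 1) 3).subset fun T hT => hT.2
  -- The left side, grouped by the index `j = max T`; the coefficient vanishes for `j < i - 1`.
  have hL : (∑ᶠ T ∈ minGens J 3, (mmax T).choose (i - 1)) =
      ∑ j ∈ Finset.Icc (i - 1) n,
        ∑ T ∈ hQfin.toFinset.filter (fun T => T + xpow (n + 1) j 1 ∈ J), j.choose (i - 1) := by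
    rw [finsum_mem_eq_finite_toFinset_sum _ hfin]
    have h1 : ∀ S ∈ hfin.toFinset, mmax S ∈ Finset.range (n + 1) := by
      intro S _
      have : mmax S ≤ n := (mmax_le_iff S n).2 fun k _ => by omega
      simp only [Finset.mem_range]
      omega
    rw [← Finset.sum_fiberwise_of_maps_to h1]
    have hsub : Finset.Icc (i - 1) n ⊆ Finset.range (n + 1) := by
      intro j hj
      simp only [Finset.mem_Icc, Finset.mem_range] at hj ⊢
      omega
    symm
    refine (Finset.sum_congr rfl ?_).trans (Finset.sum_subset hsub ?_)
    · intro j hj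
      simp only [Finset.mem_Icc] at hj
      refine Finset.sum_bij (fun T _ => T + xpow (n + 1) j 1) ?_ ?_ ?_ ?_
      · intro T hT
        simp only [Finset.mem_filter, Set.Finite.mem_toFinset] at hT ⊢
        exact (h.mem_minGens_iff hj.2 (by omega) _).2 ⟨T, hT.1, hT.2, rfl⟩
      · intro S _ T _ hST
        exact hinj j hST
      · intro S hS
        simp only [Finset.mem_filter, Set.Finite.mem_toFinset] at hS
        obtain ⟨T, hT, hTJ, hTS⟩ := (h.mem_minGens_iff hj.2 (by omega) _).1 hS
        exact ⟨T, by simp only [Finset.mem_filter, Set.Finite.mem_toFinset]; exact ⟨hT, hTJ⟩, hTS⟩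
      · intro T hT
        simp only [Finset.mem_filter, Set.Finite.mem_toFinset] at hT
        rw [((h.mem_minGens_iff hj.2 (by omega) _).2 ⟨T, hT.1, hT.2, rfl⟩).2]
    · intro j hj hj'
      simp only [Finset.mem_range, Finset.mem_Icc] at hj hj'
      refine Finset.sum_eq_zero fun S hS => ?_
      rw [(Finset.mem_filter.1 hS).2]
      exact Nat.choose_eq_zero_of_lt (by omega)
  have hR : ∀ α ∈ Finset.Icc i n,
      α.choose i * (Mset (iterSect J (n - α)) 3 (α - 1)).ncard =
        ∑ T ∈ hQfin.toFinset.filter (fun T => T + xpow (n + 1) (α - 1) 1 ∈ J ∧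
          T + xpow (n + 1) α 1 ∉ J), α.choose i := by
    intro α hα
    simp only [Finset.mem_Icc] at hα
    rw [← Set.ncard_image_of_injective _
        (pad_injective (a := n + 1 - (n - α)) (b := n + 1) (by omega)),
      h.pad_image_Mset hsat (by omega) (by omega) hα.2,
      Set.ncard_image_of_injective _ (hinj _), Finset.sum_const, smul_eq_mul, mul_comm]
    congr 1
    rw [← Set.ncard_coe_finset]
    congr 1
    ext T
    simp
  rw [hL, Finset.sum_congr rfl hR]
  simp only [Finset.sum_filter]
  rw [Finset.sum_comm, Finset.sum_comm (s := Finset.Icc i n)]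
  refine Finset.sum_congr rfl fun T hT => ?_
  have hTq := (Set.Finite.mem_toFinset hQfin).1 hT
  simp only [← Finset.sum_filter]
  refine sum_choose_initial_segment (by omega) (fun j => T + xpow (n + 1) j 1 ∈ J)
    (fun a b hab hb hmem => hB.move (by omega) hab 1 T hmem) fun hmem => hTq.2.2 ?_
  apply hsat
  rwa [single_eq_xpow]
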